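/- For all 1 ≤ t ≤ ℓ one has (λ·C_t)⁴ = 1 and (λ·C_t·U_t)³ = 1. -/

import Mathlib

/-!
Since `r` is odd, `θ = η²` for a primitive `r`-th root of unity `η`, and with `ψ n = η ^ n` the two
matrices on a single tensor factor become `F = (ψ (2xy))` and `D = diag (ψ (x²))`. Completing the
square gives the braid-type identity `(F D)² = G • D⁻¹ F⁻`, where `G = ∑ ψ (x²)` and `F⁻` belongs to
`ψ⁻¹`; as `F⁻ F = r`, this yields `(F D)³ = G r`, while `F² = r P` with `P` the permutation matrix
of `x ↦ -x`.

It remains to show `det F = r ^ ((r - 1) / 2) * G` and `G² = (-1) ^ ((r - 1) / 2) * r`, since then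
`λ * G = (-1) ^ ((r - 1) / 2)`. As `(det D)³ = 1`, the determinants of the two matrix identities
give `(G²) ^ r = ((-1) ^ ((r - 1) / 2) * r) ^ r`. On the other hand `G⁴` is the sum of `ψ (N q)`
over the quaternions `q` modulo `r`, and multiplication by a quaternion of norm `-1`, which exists
by Lagrange's four squares theorem, shows that `G⁴` is unchanged when `ψ` is replaced by `ψ⁻¹`.
Since the Gauss sums of `ψ` and `ψ⁻¹` have product `r`, this means `G⁸ = r⁴`, and the formula for
`G²` follows because `r` is coprime to `4`.
-/

open Matrix Quaternion

theorem neg_one_pow_pow_self {S : Type*} [Monoid S] [HasDistribNeg S] (m : ℕ) :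
    ((-1 : S) ^ m) ^ m = (-1) ^ m := by
  rw [← pow_mul]
  exact neg_one_pow_congr (by simp [Nat.even_mul])

theorem neg_one_pow_sq {S : Type*} [Monoid S] [HasDistribNeg S] (m : ℕ) :
    ((-1 : S) ^ m) ^ 2 = 1 := by
  rw [pow_right_comm, neg_one_sq, one_pow]

theorem eq_of_pow_eq_pow_of_coprime {M : Type*} [CommMonoidWithZero M] [IsCancelMulZero M]
    {a b : M} {m n : ℕ} (hmn : m.Coprime n) (hm : a ^ m = b ^ m) (hn : a ^ n = b ^ n) : a = b := by
  obtain rfl | rfl | h1n : n = 0 ∨ n = 1 ∨ 1 < n := by lia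
  · simpa [(Nat.coprime_zero_right m).mp hmn] using hm
  · simpa using hn
  have hn0 : n ≠ 0 := by lia
  obtain rfl | ha := eq_or_ne a 0
  · exact (eq_zero_of_pow_eq_zero (hn.symm.trans (zero_pow hn0))).symm
  obtain ⟨k, -, hk⟩ := Nat.exists_mul_mod_eq_one_of_coprime hmn h1n
  have hmk : n * (m * k / n) + 1 = m * k := by rw [← hk, Nat.div_add_mod]
  have hnq : a ^ (n * (m * k / n)) = b ^ (n * (m * k / n)) := by rw [pow_mul, hn, ← pow_mul]
  refine mul_left_cancel₀ (pow_ne_zero (n * (m * k / n)) ha) ?_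
  nth_rw 2 [hnq]
  rw [← pow_succ, ← pow_succ, hmk, pow_mul, hm, ← pow_mul]

section FiniteRing

variable {R : Type*} [CommRing R] [Fintype R]

theorem isUnit_two_of_odd_card (hR : Odd (Fintype.card R)) : IsUnit (2 : R) := by
  obtain ⟨m, hm⟩ := hR
  have hcard : (2 * m + 1 : R) = 0 := by exact_mod_cast hm ▸ Nat.cast_card_eq_zero R
  exact .of_mul_eq_one (-m) (by linear_combination -hcard)

theorem sign_neg_of_odd_card [DecidableEq R] (hR : Odd (Fintype.card R)) :
    Equiv.Perm.sign (Equiv.neg R) = (-1) ^ ((Fintype.card R - 1) / 2) := by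
  have hfixed : Function.fixedPoints (Equiv.neg R) = {0} := by
    ext x
    have h2x : 2 * x = 0 ↔ x = 0 := (isUnit_two_of_odd_card hR).mul_right_eq_zero
    rw [Function.mem_fixedPoints_iff, Equiv.neg_apply, neg_eq_iff_add_eq_zero, ← two_mul, h2x,
      Set.mem_singleton_iff]
  have hsq : Equiv.neg R ^ 2 = 1 := by ext x; simp [sq]
  have hcard : Fintype.card (Function.fixedPoints (Equiv.neg R)) = 1 := by
    rw [← Nat.card_eq_fintype_card, hfixed, Nat.card_unique]
  rw [Equiv.Perm.sign_of_pow_two_eq_one hsq, hcard]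

theorem three_mul_sum_sq_eq_zero (h2 : IsUnit (2 : R)) : 3 * ∑ x : R, x ^ 2 = 0 := by
  have hscale : ∑ x : R, (2 * x) ^ 2 = ∑ x : R, x ^ 2 :=
    Equiv.sum_comp (Units.mulLeft h2.unit) (· ^ 2)
  simp only [mul_pow, ← Finset.mul_sum] at hscale
  linear_combination hscale

theorem exists_quaternion_normSq_eq_neg_one (R : Type*) [CommRing R] [Finite R] :
    ∃ q : ℍ[R], normSq q = -1 := by
  have := Fintype.ofFinite R
  obtain ⟨a, b, c, d, habcd⟩ := Nat.sum_four_squares (Fintype.card R - 1)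
  have hcast := congrArg (Nat.cast : ℕ → R) habcd
  rw [Nat.cast_sub Fintype.card_pos, Nat.cast_card_eq_zero] at hcast
  exact ⟨⟨a, b, c, d⟩, (normSq_def' _).trans (by simpa using hcast)⟩

theorem exists_quaternion_unit_normSq_eq_neg_one (R : Type*) [CommRing R] [Finite R] :
    ∃ q : ℍ[R]ˣ, normSq (q : ℍ[R]) = -1 := by
  obtain ⟨q, hq⟩ := exists_quaternion_normSq_eq_neg_one R
  exact ⟨⟨q, -star q, by simp [self_mul_star, hq], by simp [star_mul_self, hq]⟩, hq⟩

end FiniteRing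

section Gauss

variable {R S : Type*} [CommRing R] [Fintype R] [CommRing S]

/-- The quadratic Gauss sum of an additive character. -/
def quadraticGaussSum (ψ : AddChar R S) : S := ∑ x : R, ψ (x ^ 2)

theorem quadraticGaussSum_pow_four (ψ : AddChar R S) :
    quadraticGaussSum ψ ^ 4 = ∑ v, ψ (normSq ((Quaternion.equivTuple R).symm v)) := by
  classical
  rw [quadraticGaussSum, Fintype.sum_pow]
  refine Fintype.sum_congr _ _ fun v => ?_
  rw [Fin.prod_univ_four, normSq_def']
  simp only [AddChar.map_add_eq_mul]
  rfl

theorem quadraticGaussSum_inv_pow_four (ψ : AddChar R S) :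
    quadraticGaussSum ψ⁻¹ ^ 4 = quadraticGaussSum ψ ^ 4 := by
  classical
  obtain ⟨q, hq⟩ := exists_quaternion_unit_normSq_eq_neg_one R
  rw [quadraticGaussSum_pow_four, quadraticGaussSum_pow_four,
    ← Equiv.sum_comp ((Quaternion.equivTuple R).permCongr (Units.mulLeft q))]
  simp only [Equiv.permCongr_apply, Equiv.symm_apply_apply, Units.mulLeft_apply, map_mul, hq,
    neg_one_mul, AddChar.inv_apply, neg_neg]

variable [IsDomain S] {ψ : AddChar R S}

theorem quadraticGaussSum_mul_inv (h2 : IsUnit (2 : R)) (hψ : ψ.IsPrimitive) :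
    quadraticGaussSum ψ * quadraticGaussSum ψ⁻¹ = Fintype.card R := by
  classical
  have hshift (y : R) : ∑ x, ψ (x ^ 2) * ψ⁻¹ (y ^ 2) = ∑ d, ψ (d ^ 2) * ψ (y * (2 * d)) := by
    rw [← Equiv.sum_comp (Equiv.addRight y)]
    refine Fintype.sum_congr _ _ fun d => ?_
    rw [AddChar.inv_apply, ← AddChar.map_add_eq_mul, ← AddChar.map_add_eq_mul,
      Equiv.coe_addRight]
    ring_nf
  calc quadraticGaussSum ψ * quadraticGaussSum ψ⁻¹
      = ∑ d, ψ (d ^ 2) * ∑ y, ψ (y * (2 * d)) := by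
        rw [quadraticGaussSum, quadraticGaussSum, Finset.sum_mul_sum, Finset.sum_comm,
          Fintype.sum_congr _ _ hshift, Finset.sum_comm]
        simp only [Finset.mul_sum]
    _ = Fintype.card R := by
        simp [AddChar.sum_mulShift _ hψ, h2.mul_right_eq_zero]

theorem quadraticGaussSum_pow_eight (h2 : IsUnit (2 : R)) (hψ : ψ.IsPrimitive) :
    quadraticGaussSum ψ ^ 8 = (Fintype.card R : S) ^ 4 := by
  rw [← quadraticGaussSum_mul_inv h2 hψ, mul_pow, quadraticGaussSum_inv_pow_four, ← pow_add]

end Gauss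

section Weil

variable {R S : Type*} [CommRing R] [Fintype R] [CommRing S]

/-- The matrix of the Fourier transform for `ψ`, with kernel `ψ (2xy)`: the factor `2` makes the
pairing the polarization of the quadratic form `x²` used in `chirpMatrix`. -/
def fourierMatrix (ψ : AddChar R S) : Matrix R R S := of fun x y => ψ (2 * x * y)

/-- The diagonal matrix of multiplication by the quadratic character `x ↦ ψ (x²)`. -/
def chirpMatrix [DecidableEq R] (ψ : AddChar R S) : Matrix R R S := diagonal fun x => ψ (x ^ 2)

variable [DecidableEq R]

theorem chirpMatrix_inv_mul (ψ : AddChar R S) : chirpMatrix ψ⁻¹ * chirpMatrix ψ = 1 := by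
  simp [chirpMatrix, ← AddChar.map_add_eq_mul]

theorem det_chirpMatrix_pow_three (h2 : IsUnit (2 : R)) (ψ : AddChar R S) :
    (chirpMatrix ψ).det ^ 3 = 1 := by
  have hprod : ∏ x : R, ψ (x ^ 2) = ψ (∑ x : R, x ^ 2) :=
    (map_prod ψ.toMonoidHom (fun x : R => Multiplicative.ofAdd (x ^ 2)) Finset.univ).symm
  rw [chirpMatrix, det_diagonal, hprod, ← AddChar.map_nsmul_eq_pow, nsmul_eq_mul, Nat.cast_ofNat,
    three_mul_sum_sq_eq_zero h2, AddChar.map_zero_eq_one]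

theorem fourierMatrix_eq_permMatrix_neg_mul (ψ : AddChar R S) :
    fourierMatrix ψ = (Equiv.neg R).permMatrix S * fourierMatrix ψ⁻¹ := by
  rw [PEquiv.toMatrix_toPEquiv_mul]
  ext x y
  simp [fourierMatrix]

theorem sq_fourierMatrix_mul_chirpMatrix (ψ : AddChar R S) :
    (fourierMatrix ψ * chirpMatrix ψ) ^ 2 =
      quadraticGaussSum ψ • (chirpMatrix ψ⁻¹ * fourierMatrix ψ⁻¹) := by
  have hleft (x y : R) : (fourierMatrix ψ * chirpMatrix ψ) x y = ψ (2 * x * y + y ^ 2) := by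
    simp [fourierMatrix, chirpMatrix, AddChar.map_add_eq_mul]
  have hright (x z : R) :
      (chirpMatrix ψ⁻¹ * fourierMatrix ψ⁻¹) x z = ψ (-x ^ 2 - 2 * x * z) := by
    simp [fourierMatrix, chirpMatrix, sub_eq_add_neg, AddChar.map_add_eq_mul]
  ext x z
  rw [sq, mul_apply, Matrix.smul_apply, smul_eq_mul, hright, quadraticGaussSum, Finset.sum_mul,
    ← Equiv.sum_comp (Equiv.addRight (x + z)) fun y => ψ (y ^ 2) * ψ (-x ^ 2 - 2 * x * z)]
  refine Fintype.sum_congr _ _ fun y => ?_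
  rw [hleft, hleft, ← AddChar.map_add_eq_mul, ← AddChar.map_add_eq_mul, Equiv.coe_addRight]
  ring_nf

variable [IsDomain S] {ψ : AddChar R S}

theorem fourierMatrix_inv_mul (h2 : IsUnit (2 : R)) (hψ : ψ.IsPrimitive) :
    fourierMatrix ψ⁻¹ * fourierMatrix ψ = (Fintype.card R : S) • (1 : Matrix R R S) := by
  ext x z
  have hsum : ∑ y, ψ⁻¹ (2 * x * y) * ψ (2 * y * z) = ∑ y, ψ (y * (2 * (z - x))) := by
    refine Fintype.sum_congr _ _ fun y => ?_
    rw [AddChar.inv_apply, ← AddChar.map_add_eq_mul]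
    ring_nf
  simp only [mul_apply, fourierMatrix, of_apply]
  rw [hsum, AddChar.sum_mulShift _ hψ]
  simp [h2.mul_right_eq_zero, one_apply, sub_eq_zero, eq_comm]

theorem fourierMatrix_sq (h2 : IsUnit (2 : R)) (hψ : ψ.IsPrimitive) :
    fourierMatrix ψ ^ 2 = (Fintype.card R : S) • (Equiv.neg R).permMatrix S := by
  rw [sq]
  nth_rw 1 [fourierMatrix_eq_permMatrix_neg_mul]
  rw [mul_assoc, fourierMatrix_inv_mul h2 hψ, mul_smul_comm, mul_one]

theorem fourierMatrix_pow_four (h2 : IsUnit (2 : R)) (hψ : ψ.IsPrimitive) :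
    fourierMatrix ψ ^ 4 = (Fintype.card R : S) ^ 2 • (1 : Matrix R R S) := by
  have hneg : Equiv.neg R * Equiv.neg R = 1 := by ext x; simp
  rw [show 4 = 2 * 2 from rfl, pow_mul, fourierMatrix_sq h2 hψ, smul_pow,
    sq ((Equiv.neg R).permMatrix S), ← permMatrix_mul, hneg, permMatrix_one]

theorem fourierMatrix_mul_chirpMatrix_pow_three (h2 : IsUnit (2 : R)) (hψ : ψ.IsPrimitive) :
    (fourierMatrix ψ * chirpMatrix ψ) ^ 3 =
      (quadraticGaussSum ψ * Fintype.card R) • (1 : Matrix R R S) := by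
  calc (fourierMatrix ψ * chirpMatrix ψ) ^ 3
      = quadraticGaussSum ψ •
          (chirpMatrix ψ⁻¹ * (fourierMatrix ψ⁻¹ * fourierMatrix ψ) * chirpMatrix ψ) := by
        rw [pow_succ, sq_fourierMatrix_mul_chirpMatrix, smul_mul_assoc]
        simp only [mul_assoc]
    _ = (quadraticGaussSum ψ * Fintype.card R) • (1 : Matrix R R S) := by
        rw [fourierMatrix_inv_mul h2 hψ, mul_smul_comm, mul_one, smul_mul_assoc,
          chirpMatrix_inv_mul, smul_smul]

theorem det_fourierMatrix_sq (hR : Odd (Fintype.card R)) (hψ : ψ.IsPrimitive) :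
    (fourierMatrix ψ).det ^ 2 =
      (-1) ^ ((Fintype.card R - 1) / 2) * (Fintype.card R : S) ^ Fintype.card R := by
  rw [← det_pow, fourierMatrix_sq (isUnit_two_of_odd_card hR) hψ, det_smul, det_permutation,
    sign_neg_of_odd_card hR, mul_comm]
  simp

theorem det_fourierMatrix_pow_three (h2 : IsUnit (2 : R)) (hψ : ψ.IsPrimitive) :
    (fourierMatrix ψ).det ^ 3 = (quadraticGaussSum ψ * Fintype.card R) ^ Fintype.card R := by
  have hdet := congrArg det (fourierMatrix_mul_chirpMatrix_pow_three h2 hψ)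
  rwa [det_pow, det_mul, mul_pow, det_chirpMatrix_pow_three h2, mul_one, det_smul, det_one,
    mul_one] at hdet

theorem det_fourierMatrix_eq_quadraticGaussSum_pow (hR : Odd (Fintype.card R))
    (hcard : (Fintype.card R : S) ≠ 0) (hψ : ψ.IsPrimitive) :
    (fourierMatrix ψ).det =
      (-1) ^ ((Fintype.card R - 1) / 2) * quadraticGaussSum ψ ^ Fintype.card R := by
  have hsq := det_fourierMatrix_sq hR hψ
  have hcube := det_fourierMatrix_pow_three (isUnit_two_of_odd_card hR) hψ
  have hsign := neg_one_pow_sq (S := S) ((Fintype.card R - 1) / 2)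
  generalize (-1 : S) ^ ((Fintype.card R - 1) / 2) = s at *
  refine mul_right_cancel₀ (pow_ne_zero (Fintype.card R) hcard) ?_
  rw [mul_pow] at hcube
  linear_combination s * hcube - s * (fourierMatrix ψ).det * hsq -
    (fourierMatrix ψ).det * (Fintype.card R : S) ^ Fintype.card R * hsign

end Weil

section Evaluation

variable {R S : Type*} [CommRing R] [Fintype R] [CommRing S] [IsDomain S] {ψ : AddChar R S}

theorem quadraticGaussSum_sq (hR : Odd (Fintype.card R)) (hcard : (Fintype.card R : S) ≠ 0)
    (hψ : ψ.IsPrimitive) :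
    quadraticGaussSum ψ ^ 2 = (-1) ^ ((Fintype.card R - 1) / 2) * (Fintype.card R : S) := by
  classical
  have hcoprime : (Fintype.card R).Coprime 4 := hR.coprime_two_right.pow_right 2
  refine eq_of_pow_eq_pow_of_coprime hcoprime ?_ ?_
  · have hsq := det_fourierMatrix_sq hR hψ
    rw [det_fourierMatrix_eq_quadraticGaussSum_pow hR hcard hψ, mul_pow, neg_one_pow_sq,
      one_mul] at hsq
    rw [pow_right_comm, hsq, mul_pow, pow_right_comm, hR.neg_one_pow]
  · rw [← pow_mul, quadraticGaussSum_pow_eight (isUnit_two_of_odd_card hR) hψ, mul_pow,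
      pow_right_comm, Even.neg_one_pow (by decide), one_pow, one_mul]

theorem det_fourierMatrix [DecidableEq R] (hR : Odd (Fintype.card R))
    (hcard : (Fintype.card R : S) ≠ 0) (hψ : ψ.IsPrimitive) :
    (fourierMatrix ψ).det =
      (Fintype.card R : S) ^ ((Fintype.card R - 1) / 2) * quadraticGaussSum ψ := by
  have hdet := det_fourierMatrix_eq_quadraticGaussSum_pow hR hcard hψ
  have hsq := quadraticGaussSum_sq hR hcard hψ
  have hpow : quadraticGaussSum ψ ^ Fintype.card R =
      (quadraticGaussSum ψ ^ 2) ^ ((Fintype.card R - 1) / 2) * quadraticGaussSum ψ := by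
    obtain ⟨m, hm⟩ := hR
    rw [← pow_mul, ← pow_succ]
    congr 1
    lia
  rw [hdet, hpow, hsq, mul_pow, neg_one_pow_pow_self, mul_assoc, ← mul_assoc, ← sq, neg_one_pow_sq,
    one_mul]

end Evaluation

section Scalar

variable {R 𝔽 : Type*} [CommRing R] [Fintype R] [DecidableEq R] [Field 𝔽] {ψ : AddChar R 𝔽}

/-- The scalar `λ` by which the Fourier matrix is normalised. -/
noncomputable def weilScalar (ψ : AddChar R 𝔽) : 𝔽 :=
  (-(Fintype.card R : 𝔽)) ^ ((Fintype.card R - 1) / 2) * (fourierMatrix ψ).det⁻¹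

theorem weilScalar_mul_quadraticGaussSum (hR : Odd (Fintype.card R))
    (hcard : (Fintype.card R : 𝔽) ≠ 0) (hψ : ψ.IsPrimitive) :
    weilScalar ψ * quadraticGaussSum ψ = (-1) ^ ((Fintype.card R - 1) / 2) := by
  have hG : quadraticGaussSum ψ ≠ 0 := by
    refine pow_ne_zero_iff two_ne_zero |>.mp ?_
    rw [quadraticGaussSum_sq hR hcard hψ]
    exact mul_ne_zero (pow_ne_zero _ (neg_ne_zero.mpr one_ne_zero)) hcard
  rw [weilScalar, det_fourierMatrix hR hcard hψ, neg_pow]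
  field_simp

theorem weilScalar_sq_mul_card (hR : Odd (Fintype.card R))
    (hcard : (Fintype.card R : 𝔽) ≠ 0) (hψ : ψ.IsPrimitive) :
    weilScalar ψ ^ 2 * Fintype.card R = (-1) ^ ((Fintype.card R - 1) / 2) := by
  have hscalar := weilScalar_mul_quadraticGaussSum hR hcard hψ
  have hsq := quadraticGaussSum_sq hR hcard hψ
  have hsign := neg_one_pow_sq (S := 𝔽) ((Fintype.card R - 1) / 2)
  generalize (-1 : 𝔽) ^ ((Fintype.card R - 1) / 2) = s at *
  linear_combination s * (weilScalar ψ * quadraticGaussSum ψ + s) * hscalar -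
    s * weilScalar ψ ^ 2 * hsq - (weilScalar ψ ^ 2 * Fintype.card R - s) * hsign

theorem weilScalar_smul_fourierMatrix_pow_four (hR : Odd (Fintype.card R))
    (hcard : (Fintype.card R : 𝔽) ≠ 0) (hψ : ψ.IsPrimitive) :
    (weilScalar ψ • fourierMatrix ψ) ^ 4 = 1 := by
  have hcoeff : weilScalar ψ ^ 4 * (Fintype.card R : 𝔽) ^ 2 = 1 := by
    calc weilScalar ψ ^ 4 * (Fintype.card R : 𝔽) ^ 2
        = (weilScalar ψ ^ 2 * Fintype.card R) ^ 2 := by ring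
      _ = 1 := by
        rw [weilScalar_sq_mul_card hR hcard hψ, neg_one_pow_sq]
  rw [smul_pow, fourierMatrix_pow_four (isUnit_two_of_odd_card hR) hψ, smul_smul, hcoeff, one_smul]

theorem weilScalar_smul_fourierMatrix_mul_chirpMatrix_pow_three (hR : Odd (Fintype.card R))
    (hcard : (Fintype.card R : 𝔽) ≠ 0) (hψ : ψ.IsPrimitive) :
    (weilScalar ψ • fourierMatrix ψ * chirpMatrix ψ) ^ 3 = 1 := by
  have hcoeff : weilScalar ψ ^ 3 * (quadraticGaussSum ψ * Fintype.card R) = 1 := by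
    calc weilScalar ψ ^ 3 * (quadraticGaussSum ψ * Fintype.card R)
        = weilScalar ψ ^ 2 * Fintype.card R * (weilScalar ψ * quadraticGaussSum ψ) := by ring
      _ = 1 := by
        rw [weilScalar_sq_mul_card hR hcard hψ, weilScalar_mul_quadraticGaussSum hR hcard hψ, ← sq,
          neg_one_pow_sq]
  rw [smul_mul_assoc, smul_pow,
    fourierMatrix_mul_chirpMatrix_pow_three (isUnit_two_of_odd_card hR) hψ, smul_smul, hcoeff,
    one_smul]

end Scalar

section TensorFactor

variable {ι α S : Type*} [Fintype ι] [DecidableEq ι] [Fintype α] [DecidableEq α] [CommSemiring S]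

/-- The action `1 ⊗ ⋯ ⊗ M ⊗ ⋯ ⊗ 1` of a matrix `M` on the `t`-th factor of the tensor power
`(α → S)^{⊗ ι}`, whose standard basis is indexed by `ι → α`. -/
def tensorFactorHom (t : ι) : Matrix α α S →ₐ[S] Matrix (ι → α) (ι → α) S :=
  (reindexAlgEquiv S S (Equiv.funSplitAt t α).symm).toAlgHom.comp
    ((kroneckerAlgEquiv α ({i // i ≠ t} → α) S).toAlgHom.comp Algebra.TensorProduct.includeLeft)

theorem tensorFactorHom_apply (t : ι) (M : Matrix α α S) (η ξ : ι → α) :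
    tensorFactorHom t M η ξ = if ∀ i, i ≠ t → η i = ξ i then M (η t) (ξ t) else 0 := by
  simp [tensorFactorHom, one_apply, funext_iff]

theorem tensorFactorHom_diagonal (t : ι) (d : α → S) :
    tensorFactorHom t (diagonal d) = diagonal fun ξ => d (ξ t) := by
  simp [tensorFactorHom, ← diagonal_one, diagonal_kronecker_diagonal, Function.comp_def]

end TensorFactor

section RootOfUnity

variable {M : Type*} [CommMonoid M] {r : ℕ}

theorem exists_isPrimitiveRoot_sq_eq {θ : M} (hθ : IsPrimitiveRoot θ r) (hr : Odd r) :
    ∃ η : M, IsPrimitiveRoot η r ∧ η ^ 2 = θ := by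
  obtain ⟨m, rfl⟩ := hr
  refine ⟨θ ^ (m + 1), hθ.pow_of_coprime _ ?_, ?_⟩
  · rw [show 2 * m + 1 = m + 1 + m by ring]
    simp
  · rw [← pow_mul, show (m + 1) * 2 = 2 * m + 1 + 1 by ring, pow_succ, hθ.pow_eq_one, one_mul]

variable [NeZero r] {η : M} (hη : η ^ r = 1)

theorem zmodChar_two_mul (x : ZMod r) : AddChar.zmodChar r hη (2 * x) = (η ^ 2) ^ x.val := by
  rw [two_mul, AddChar.map_add_eq_mul, AddChar.zmodChar_apply, ← sq, pow_right_comm]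

theorem zmodChar_sq (hr : Odd r) (x : ZMod r) :
    AddChar.zmodChar r hη (x ^ 2) = (η ^ 2) ^ (x.val * (x.val + r) / 2) := by
  have heven : 2 ∣ x.val * (x.val + r) := by
    rcases Nat.even_or_odd x.val with hx | hx
    · exact (hx.mul_right _).two_dvd
    · exact ((hx.add_odd hr).mul_left _).two_dvd
  rw [← pow_mul, Nat.mul_div_cancel' heven, mul_add, pow_add, mul_comm _ r, pow_mul η r, hη,
    one_pow, mul_one, ← AddChar.zmodChar_apply' hη]
  simp [sq]

end RootOfUnity

theorem weil_relations_general {r : ℕ} [NeZero r] (hr : Odd r)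
    {𝔽 : Type*} [Field 𝔽] {θ : 𝔽} (hθ : IsPrimitiveRoot θ r)
    {ι : Type*} [Fintype ι] [DecidableEq ι]
    (Cb : Matrix (ZMod r) (ZMod r) 𝔽)
    (hCb : ∀ i j : ZMod r, Cb i j = θ ^ (i * j).val)
    (lam : 𝔽) (hlam : lam = (-(r : 𝔽)) ^ ((r - 1) / 2) * Cb.det⁻¹)
    (C : ι → Matrix (ι → ZMod r) (ι → ZMod r) 𝔽)
    (hC : ∀ t η ξ, C t η ξ =
      if ∀ i, i ≠ t → η i = ξ i then θ ^ (η t * ξ t).val else 0)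
    (U : ι → Matrix (ι → ZMod r) (ι → ZMod r) 𝔽)
    (hU : ∀ t, U t = Matrix.diagonal fun ξ => θ ^ ((ξ t).val * ((ξ t).val + r) / 2)) :
    ∀ t : ι, (lam • C t) ^ 4 = 1 ∧ (lam • C t * U t) ^ 3 = 1 := by
  intro t
  obtain ⟨η, hη, rfl⟩ := exists_isPrimitiveRoot_sq_eq hθ hr
  let ψ := AddChar.zmodChar r hη.pow_eq_one
  have hψ : ψ.IsPrimitive := AddChar.zmodChar_primitive_of_primitive_root r hη
  have hR : Odd (Fintype.card (ZMod r)) := by rwa [ZMod.card]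
  have hcard : (Fintype.card (ZMod r) : 𝔽) ≠ 0 := by rw [ZMod.card]; exact hη.neZero'.ne
  have hF : Cb = fourierMatrix ψ := by
    ext i j
    rw [hCb, fourierMatrix, of_apply, mul_assoc, zmodChar_two_mul]
  have hCt : C t = tensorFactorHom t (fourierMatrix ψ) := by
    ext x y
    rw [hC, tensorFactorHom_apply, ← hF, hCb]
  have hUt : U t = tensorFactorHom t (chirpMatrix ψ) := by
    rw [hU, chirpMatrix, tensorFactorHom_diagonal]
    simp only [ψ, zmodChar_sq hη.pow_eq_one hr]
  have hscalar : lam = weilScalar ψ := by rw [hlam, hF, weilScalar, ZMod.card]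
  rw [hCt, hUt, hscalar, ← map_smul, ← map_mul, ← map_pow, ← map_pow,
    weilScalar_smul_fourierMatrix_pow_four hR hcard hψ,
    weilScalar_smul_fourierMatrix_mul_chirpMatrix_pow_three hR hcard hψ, map_one]
  exact ⟨rfl, rfl⟩

/-- `(λC_t)⁴ = 1` and `(λC_t·U_t)³ = 1` for all `t`. -/
theorem weil_relations
    {r : ℕ} [Fact (Nat.Prime r)] (hr : Odd r)
    {𝔽 : Type*} [Field 𝔽] {θ : 𝔽} (hθ : IsPrimitiveRoot θ r)
    {ℓ : ℕ} (hℓ : 1 ≤ ℓ)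
    (Cb : Matrix (ZMod r) (ZMod r) 𝔽)
    (hCb : ∀ i j : ZMod r, Cb i j = θ ^ (i * j).val)
    (lam : 𝔽) (hlam : lam = (-(r : 𝔽)) ^ ((r - 1) / 2) * Cb.det⁻¹)
    (C : Fin ℓ → Matrix (Fin ℓ → ZMod r) (Fin ℓ → ZMod r) 𝔽)
    (hC : ∀ t η ξ, C t η ξ =
      if ∀ i, i ≠ t → η i = ξ i then θ ^ (η t * ξ t).val else 0)
    (U : Fin ℓ → Matrix (Fin ℓ → ZMod r) (Fin ℓ → ZMod r) 𝔽)
    (hU : ∀ t, U t = Matrix.diagonal fun ξ => θ ^ ((ξ t).val * ((ξ t).val + r) / 2)) :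
    ∀ t : Fin ℓ, (lam • C t) ^ 4 = 1 ∧ (lam • C t * U t) ^ 3 = 1 :=
  weil_relations_general hr hθ Cb hCb lam hlam C (fun t η ξ => by convert hC t η ξ) U hU
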